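/- The number of permutations of {1,...,n} avoiding the Hertzsprung pattern 132 equals the sum over i from 0 to ⌊n/3⌋ of (-1)^i · (n-2i)! · C(n-2i, i). -/

import Mathlib

/-- A permutation (as a list) avoids the Hertzsprung pattern 132 if no three
consecutive entries are of the form b, b+2, b+1. -/
def Avoids132 (l : List ℕ) : Prop :=
  ∀ i < l.length,
    ¬ (l.getD (i+1) 0 = l.getD i 0 + 2 ∧ l.getD (i+2) 0 = l.getD i 0 + 1)

instance : DecidablePred Avoids132 := fun _ => Nat.decidableBallLT _ _

/-!
Fix a pattern `σ` of length `k + 1` whose translates cannot overlap, such as 132. By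
inclusion-exclusion, the number of permutations avoiding `σ` is the sum over sets `B` of translates
of `(-1) ^ #B` times the number of permutations in which all translates in `B` occur. That number
vanishes unless the value intervals of these translates are disjoint and contained in
`{1, ..., n}`. If they are, gluing each translate into a single block leaves an arbitrary
arrangement of `n - k * #B` distinct blocks, while contracting the intervals to points shows that
there are `C(n - k * i, i)` such sets `B` of size `i`.
-/

open Finset InformationTheory

section BlockArrangements

variable {α : Type*}

theorem infix_of_infix_append_of_disjoint {u v w : List α} (h : u <:+: v ++ w)
    (hd : u.Disjoint v) : u <:+: w := by
  rcases List.infix_append_iff_ne_nil.1 h with hv | hw | ⟨r, t, hr, -, rfl, hrv, -⟩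
  · obtain rfl : u = [] := List.eq_nil_iff_forall_not_mem.2 fun _ hx => hd hx (hv.subset hx)
    exact List.nil_infix
  · exact hw
  · obtain ⟨x, hx⟩ := List.exists_mem_of_ne_nil r hr
    exact (hd (List.mem_append_left t hx) (hrv.subset hx)).elim

theorem prefix_of_infix_cons_of_mem {a : α} {w l : List α} (hl : (a :: l).Nodup)
    (hw : w <:+: a :: l) (ha : a ∈ w) : w <+: a :: l :=
  (List.infix_cons_iff.1 hw).resolve_right fun h => (List.nodup_cons.1 hl).1 (h.subset ha)

theorem uniquelyDecodable_of_pairwise_disjoint {S : Set (List α)} (hne : [] ∉ S)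
    (hS : S.Pairwise List.Disjoint) : UniquelyDecodable S := by
  intro L M hL
  induction L generalizing M with
  | nil =>
    rcases M with _ | ⟨w, M⟩ <;> intro hM h
    · rfl
    · have hw : w = [] := (List.append_eq_nil_iff.1 h.symm).1
      exact (hne (hw ▸ hM w List.mem_cons_self)).elim
  | cons v L ih =>
    intro hM h
    obtain ⟨hv, hLS⟩ := List.forall_mem_cons.1 hL
    obtain ⟨a, v, rfl⟩ := List.exists_cons_of_ne_nil (ne_of_mem_of_not_mem hv hne)
    rcases M with _ | ⟨w, M⟩
    · simp at h
    obtain ⟨hw, hMS⟩ := List.forall_mem_cons.1 hM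
    obtain ⟨b, w, rfl⟩ := List.exists_cons_of_ne_nil (ne_of_mem_of_not_mem hw hne)
    obtain rfl : a = b := (List.cons.inj h).1
    have hvw : a :: v = a :: w := hS.eq hv hw fun hd =>
      hd List.mem_cons_self List.mem_cons_self
    rw [hvw] at h ⊢
    rw [ih M hLS hMS (List.append_cancel_left h)]

theorem pairwise_disjoint_of_nodup_flatten {L : List (List α)} (hL : L.flatten.Nodup) :
    {w | w ∈ L}.Pairwise List.Disjoint :=
  haveI : Std.Symm (List.Disjoint (α := α)) := ⟨fun _ _ => List.Disjoint.symm⟩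
  fun _ hv _ hw => (List.nodup_flatten.1 hL).2.forall hv hw

-- The block containing the first entry of `l` must start there, so it can be peeled off.
theorem exists_perm_flatten_eq {L : List (List α)} {l : List α}
    (hne : [] ∉ L) (hl : l.Nodup) (hperm : l.Perm L.flatten) (hL : ∀ w ∈ L, w <:+: l) :
    ∃ M : List (List α), M.Perm L ∧ M.flatten = l := by
  classical
  induction hk : L.length generalizing L l with
  | zero =>
    obtain rfl := List.length_eq_zero_iff.1 hk
    exact ⟨[], .nil, hperm.eq_nil.symm⟩
  | succ k ih =>
    obtain _ | ⟨a, t⟩ := l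
    · obtain ⟨w, hw⟩ := List.exists_mem_of_length_pos (by omega : 0 < L.length)
      exact (hne (List.infix_nil.1 (hL w hw) ▸ hw)).elim
    obtain ⟨w, hw, haw⟩ := List.mem_flatten.1 (hperm.subset List.mem_cons_self)
    obtain ⟨u, hu⟩ := prefix_of_infix_cons_of_mem hl (hL w hw) haw
    rw [← hu] at hl hperm hL ⊢
    have hLw : L.Perm (w :: L.erase w) := List.perm_cons_erase hw
    have hdisj : ∀ v ∈ L.erase w, v.Disjoint w := by
      have hnd := (hperm.trans hLw.flatten).nodup_iff.1 hl
      exact fun v hv => ((List.pairwise_cons.1 (List.nodup_flatten.1 hnd).2).1 v hv).symm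
    obtain ⟨M, hM, hMu⟩ := ih (fun h => hne (List.mem_of_mem_erase h)) hl.of_append_right
      ((List.perm_append_left_iff w).1 (hperm.trans hLw.flatten))
      (fun v hv => infix_of_infix_append_of_disjoint (hL v (List.mem_of_mem_erase hv))
        (hdisj v hv))
      (by rw [List.length_erase_of_mem hw, hk, Nat.add_sub_cancel])
    exact ⟨w :: M, (hM.cons w).trans hLw.symm, by rw [List.flatten_cons, hMu]⟩

variable [DecidableEq α]

theorem card_permutations_flatten_filter_infix {L : List (List α)} (hne : [] ∉ L)
    (hL : L.flatten.Nodup) :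
    #{l ∈ L.flatten.permutations.toFinset | ∀ w ∈ L, w <:+: l} = L.length.factorial := by
  have himage : ({l ∈ L.flatten.permutations.toFinset | ∀ w ∈ L, w <:+: l} : Finset (List α)) =
      L.permutations.toFinset.image List.flatten := by
    ext l
    simp only [mem_filter, List.mem_toFinset, List.mem_permutations, mem_image]
    constructor
    · rintro ⟨hl, hw⟩
      exact exists_perm_flatten_eq hne (hl.nodup_iff.2 hL) hl hw
    · rintro ⟨M, hM, rfl⟩
      exact ⟨hM.flatten, fun w hw => List.infix_of_mem_flatten (hM.mem_iff.2 hw)⟩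
  have hinj : Set.InjOn List.flatten (L.permutations.toFinset : Set (List (List α))) := by
    intro M hM N hN
    simp only [List.coe_toFinset, Set.mem_ofPred_eq, List.mem_permutations] at hM hN
    exact uniquelyDecodable_of_pairwise_disjoint hne (pairwise_disjoint_of_nodup_flatten hL)
      M N (fun w => hM.mem_iff.1) (fun w => hN.mem_iff.1)
  have hLnd : L.Nodup := (List.nodup_flatten.1 hL).2.imp_of_mem fun hv _ hd hvw => by
    subst hvw
    obtain ⟨a, ha⟩ := List.exists_mem_of_ne_nil _ (ne_of_mem_of_not_mem hv hne)
    exact hd ha ha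
  rw [himage, card_image_of_injOn hinj,
    List.toFinset_card_of_nodup (List.nodup_permutations _ hLnd), List.length_permutations]

theorem card_permutations_filter_infix {s : List α} {L : List (List α)} (hs : s.Nodup)
    (hne : [] ∉ L) (hL : L.flatten.Nodup) (hLs : L.flatten ⊆ s) :
    #{l ∈ s.permutations.toFinset | ∀ w ∈ L, w <:+: l} =
      (s.length - L.flatten.length + L.length).factorial := by
  obtain ⟨r, hr⟩ : ∃ r, (L.flatten ++ r).Perm s :=
    ⟨_, List.subperm_append_diff_self_of_count_le
      (List.subperm_ext_iff.1 (List.subperm_of_subset hL hLs))⟩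
  have hflat : (L ++ r.map ([·])).flatten = L.flatten ++ r := by
    simp [← List.flatMap_def]
  have hcard := card_permutations_flatten_filter_infix (L := L ++ r.map ([·])) (by simpa using hne)
    (by rw [hflat]; exact hr.nodup_iff.2 hs)
  have hlen : s.length - L.flatten.length + L.length = (L ++ r.map ([·])).length := by
    rw [← hr.length_eq]
    simp only [List.length_append, List.length_map]
    omega
  rw [hlen, ← hcard, hflat, List.toFinset_eq_of_perm _ _ (hr.permutations)]
  refine congrArg card (filter_congr fun l hl => ?_)
  rw [List.mem_toFinset, List.mem_permutations] at hl
  have hrl : ∀ x ∈ r, [x] <:+: l := fun x hx =>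
    (List.singleton_infix_iff x l).2 (hl.mem_iff.2 (hr.subset (List.mem_append_right _ hx)))
  rw [List.forall_mem_append, List.forall_mem_map]
  exact (and_iff_left hrl).symm

end BlockArrangements

section InclusionExclusion

theorem card_filter_forall_not {α ι : Type*} (s : Finset α) (I : Finset ι) (p : ι → α → Prop)
    [∀ i, DecidablePred (p i)] :
    (#{x ∈ s | ∀ i ∈ I, ¬ p i x} : ℤ) =
      ∑ B ∈ I.powerset, (-1) ^ #B * (#{x ∈ s | ∀ i ∈ B, p i x} : ℤ) := by
  classical
  have hcard (q : α → Prop) [DecidablePred q] : #{x ∈ s | q x} = #{x : s | q x} := by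
    simp [univ_eq_attach, filter_attach]
  have h := inclusion_exclusion_card_inf_compl I fun i => ({x | p i x} : Finset s)
  have hcompl :
      (I.inf fun i => ({x | p i x} : Finset s)ᶜ) = ({x | ∀ i ∈ I, ¬ p i x} : Finset s) := by
    ext; simp [mem_inf]
  have hinf (B : Finset ι) :
      (B.inf fun i => ({x | p i x} : Finset s)) = ({x | ∀ i ∈ B, p i x} : Finset s) := by
    ext; simp [mem_inf]
  rw [hcompl] at h
  simp only [hcard]
  simpa only [hinf] using h

end InclusionExclusion

section IntervalPackings

/-- `B` is the set of left endpoints of pairwise disjoint intervals of `k + 1` consecutive integers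
inside `{0, ..., n - 1}`. -/
def IsIntervalPacking (k n : ℕ) (B : Finset ℕ) : Prop :=
  (∀ b ∈ B, b + k < n) ∧ ∀ a ∈ B, ∀ b ∈ B, a < b → a + k < b

instance (k n : ℕ) : DecidablePred (IsIntervalPacking k n) :=
  fun _ => inferInstanceAs (Decidable (_ ∧ _))

/-- The packings of `i` disjoint intervals of `k + 1` consecutive integers in `{0, ..., n - 1}`. -/
def intervalPackings (k n i : ℕ) : Finset (Finset ℕ) :=
  {B ∈ powersetCard i (range n) | IsIntervalPacking k n B}

theorem mem_intervalPackings {k n i : ℕ} {B : Finset ℕ} :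
    B ∈ intervalPackings k n i ↔ IsIntervalPacking k n B ∧ #B = i := by
  have hsub (hB : IsIntervalPacking k n B) : B ⊆ range n := fun b hb =>
    mem_range.2 (Nat.lt_of_add_right_lt (hB.1 b hb))
  simp only [intervalPackings, mem_filter, mem_powersetCard]
  tauto

theorem intervalPackings_zero (k n : ℕ) : intervalPackings k n 0 = {∅} := by
  ext B
  simp only [mem_intervalPackings, card_eq_zero, mem_singleton, and_iff_right_iff_imp]
  rintro rfl
  simp [IsIntervalPacking]

theorem intervalPackings_eq_empty_of_le {k n : ℕ} (h : n ≤ k) (i : ℕ) :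
    intervalPackings k n (i + 1) = ∅ := by
  refine eq_empty_of_forall_notMem fun B hB => ?_
  obtain ⟨hB, hcard⟩ := mem_intervalPackings.1 hB
  obtain ⟨b, hb⟩ := card_pos.1 (by omega : 0 < #B)
  have := hB.1 b hb
  omega

theorem IsIntervalPacking.right_notMem {k n : ℕ} {B : Finset ℕ} (hB : IsIntervalPacking k n B) :
    n ∉ B := fun hn => by
  have := hB.1 n hn
  omega

theorem isIntervalPacking_insert_iff {k n : ℕ} {B : Finset ℕ} (hn : n ∉ B) :
    IsIntervalPacking k (n + k + 1) (insert n B) ↔ IsIntervalPacking k n B := by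
  simp only [IsIntervalPacking, mem_insert]
  grind

theorem isIntervalPacking_succ_iff_of_notMem {k n : ℕ} {B : Finset ℕ} (hn : n ∉ B) :
    IsIntervalPacking k (n + k + 1) B ↔ IsIntervalPacking k (n + k) B := by
  unfold IsIntervalPacking
  grind

theorem card_intervalPackings_succ (k n i : ℕ) :
    #(intervalPackings k (n + k + 1) (i + 1)) =
      #(intervalPackings k n i) + #(intervalPackings k (n + k) (i + 1)) := by
  have hmem : #{B ∈ intervalPackings k (n + k + 1) (i + 1) | n ∈ B} =
      #(intervalPackings k n i) := by
    refine card_nbij' (erase · n) (insert n) (fun B hB => ?_) (fun C hC => ?_)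
      (fun B hB => insert_erase (mem_filter.1 hB).2) (fun C hC => erase_insert ?_)
    · obtain ⟨hB, hn⟩ := mem_filter.1 hB
      obtain ⟨hB, hcard⟩ := mem_intervalPackings.1 hB
      rw [← insert_erase hn, isIntervalPacking_insert_iff (notMem_erase n B)] at hB
      exact mem_intervalPackings.2 ⟨hB, by rw [card_erase_of_mem hn, hcard, Nat.add_sub_cancel]⟩
    · obtain ⟨hC, hcard⟩ := mem_intervalPackings.1 hC
      have hn := hC.right_notMem
      exact mem_filter.2 ⟨mem_intervalPackings.2 ⟨(isIntervalPacking_insert_iff hn).2 hC,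
        by rw [card_insert_of_notMem hn, hcard]⟩, mem_insert_self n C⟩
    · exact (mem_intervalPackings.1 hC).1.right_notMem
  have hnotMem : {B ∈ intervalPackings k (n + k + 1) (i + 1) | n ∉ B} =
      intervalPackings k (n + k) (i + 1) := by
    ext B
    simp only [mem_filter, mem_intervalPackings]
    constructor
    · rintro ⟨⟨hB, hcard⟩, hn⟩
      exact ⟨(isIntervalPacking_succ_iff_of_notMem hn).1 hB, hcard⟩
    · rintro ⟨hB, hcard⟩
      have hn : n ∉ B := fun hn => (hB.1 n hn).false
      exact ⟨⟨(isIntervalPacking_succ_iff_of_notMem hn).2 hB, hcard⟩, hn⟩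
  rw [← card_filter_add_card_filter_not (n ∈ ·), hmem, hnotMem]

theorem card_intervalPackings (k n i : ℕ) :
    #(intervalPackings k n i) = (n - k * i).choose i := by
  induction n using Nat.strong_induction_on generalizing i with
  | _ n ih =>
    obtain _ | i := i
    · simp [intervalPackings_zero]
    obtain hn | ⟨m, rfl⟩ : n ≤ k ∨ ∃ m, n = m + k + 1 := by
      obtain hn | hn := le_or_gt n k
      · exact .inl hn
      · exact .inr ⟨n - k - 1, by omega⟩
    · have : n - k * (i + 1) = 0 := by grind
      simp [intervalPackings_eq_empty_of_le hn, this]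
    rw [card_intervalPackings_succ, ih m (by omega), ih (m + k) (by omega)]
    have h1 : m + k - k * (i + 1) = m - k * i := by grind
    obtain hi | hi := le_or_gt (k * i) m
    · have h2 : m + k + 1 - k * (i + 1) = m - k * i + 1 := by grind
      rw [h1, h2, Nat.choose_succ_succ]
    · have h2 : m + k + 1 - k * (i + 1) = 0 := by grind
      obtain ⟨j, rfl⟩ : ∃ j, i = j + 1 := Nat.exists_eq_succ_of_ne_zero (by grind)
      rw [h1, h2, Nat.sub_eq_zero_of_le hi.le]
      simp

end IntervalPackings

section HertzsprungPatterns

/-- `l` avoids the Hertzsprung pattern `σ`: no factor of `l` is a translate of `σ`. Patterns use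
the letters `1, 2, ...` and lists have positive entries, so that only translates by `c ≥ 0`
matter. -/
def AvoidsHertzsprung (σ l : List ℕ) : Prop :=
  ∀ c, ¬ σ.map (c + ·) <:+: l

/-- The occurrences of translates of `σ` in a list without repetitions take values in disjoint
intervals. For a permutation `σ` this says that `σ` has trivial autocorrelation. -/
def IsNonoverlapping (σ : List ℕ) : Prop :=
  ∀ ⦃l : List ℕ⦄, l.Nodup → ∀ ⦃c d : ℕ⦄, σ.map (c + ·) <:+: l → σ.map (d + ·) <:+: l →
    c < d → c + σ.length ≤ d

variable {σ : List ℕ} {k n : ℕ}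

theorem mem_map_add_of_perm_range' (hσ : σ.Perm (List.range' 1 (k + 1))) {c x : ℕ} :
    x ∈ σ.map (c + ·) ↔ c < x ∧ x ≤ c + k + 1 := by
  rw [(hσ.map _).mem_iff, List.map_add_range', List.mem_range'_1]
  omega

theorem add_lt_of_map_add_infix (hσ : σ.Perm (List.range' 1 (k + 1))) {l : List ℕ}
    (hl : l.Perm (List.range' 1 n)) {c : ℕ} (hc : σ.map (c + ·) <:+: l) : c + k < n := by
  have hmem : c + k + 1 ∈ l := hc.subset ((mem_map_add_of_perm_range' hσ).2 (by omega))
  rw [hl.mem_iff, List.mem_range'_1] at hmem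
  omega

theorem isIntervalPacking_of_map_add_infix (hσ : σ.Perm (List.range' 1 (k + 1)))
    (hov : IsNonoverlapping σ) {l : List ℕ} (hl : l.Perm (List.range' 1 n)) {B : Finset ℕ}
    (hB : ∀ c ∈ B, σ.map (c + ·) <:+: l) : IsIntervalPacking k n B := by
  refine ⟨fun c hc => add_lt_of_map_add_infix hσ hl (hB c hc), fun c hc d hd hcd => ?_⟩
  have := hov (hl.nodup_iff.2 List.nodup_range') (hB c hc) (hB d hd) hcd
  rw [hσ.length_eq, List.length_range'] at this
  omega

theorem nodup_flatMap_map_add (hσ : σ.Perm (List.range' 1 (k + 1))) {B : Finset ℕ}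
    (hB : IsIntervalPacking k n B) : (B.toList.flatMap fun c => σ.map (c + ·)).Nodup := by
  refine List.nodup_flatMap.2 ⟨fun c _ => ?_, B.nodup_toList.pairwise_of_forall_ne ?_⟩
  · exact (hσ.nodup_iff.2 List.nodup_range').map (add_right_injective c)
  · intro c hc d hd hcd x hxc hxd
    rw [mem_map_add_of_perm_range' hσ] at hxc hxd
    rw [mem_toList] at hc hd
    have := hB.2 c hc d hd
    have := hB.2 d hd c hc
    omega

theorem card_permutations_filter_map_add_infix (hσ : σ.Perm (List.range' 1 (k + 1)))
    {B : Finset ℕ} (hB : IsIntervalPacking k n B) :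
    #{l ∈ (List.range' 1 n).permutations.toFinset | ∀ c ∈ B, σ.map (c + ·) <:+: l} =
      (n - k * #B).factorial := by
  set L : List (List ℕ) := B.toList.map fun c => σ.map (c + ·) with hL
  have hne : [] ∉ L := by
    have : σ ≠ [] := by rintro rfl; simp at hσ
    simp [hL, this]
  have hnodup : L.flatten.Nodup := nodup_flatMap_map_add hσ hB
  have hsub : L.flatten ⊆ List.range' 1 n := by
    intro x hx
    obtain ⟨c, hc, hx⟩ := List.mem_flatMap.1 hx
    have := hB.1 c (mem_toList.1 hc)
    rw [mem_map_add_of_perm_range' hσ] at hx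
    rw [List.mem_range'_1]
    omega
  have hlen : L.flatten.length = k * #B + #B := by
    simp only [hL, List.length_flatten, List.map_map, Function.comp_def, List.length_map,
      hσ.length_eq, List.length_range', List.map_const', List.sum_replicate, length_toList,
      smul_eq_mul]
    ring
  have hle : L.flatten.length ≤ n := by
    simpa using (List.subperm_of_subset hnodup hsub).length_le
  have hcard := card_permutations_filter_infix List.nodup_range' hne hnodup hsub
  simp only [hL, List.forall_mem_map, mem_toList] at hcard
  rw [hcard, ← hL, List.length_range', List.length_map, length_toList]
  congr 1
  omega

theorem sum_powersetCard_card_filter_map_add_infix (hσ : σ.Perm (List.range' 1 (k + 1)))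
    (hov : IsNonoverlapping σ) (n i : ℕ) :
    ∑ B ∈ powersetCard i (range n), (-1 : ℤ) ^ #B *
        #{l ∈ (List.range' 1 n).permutations.toFinset | ∀ c ∈ B, σ.map (c + ·) <:+: l} =
      (-1) ^ i * (n - k * i).factorial * (n - k * i).choose i := by
  have hpacking : ∀ B ∈ powersetCard i (range n), (-1 : ℤ) ^ #B *
      #{l ∈ (List.range' 1 n).permutations.toFinset | ∀ c ∈ B, σ.map (c + ·) <:+: l} =
      if IsIntervalPacking k n B then (-1 : ℤ) ^ i * (n - k * i).factorial else 0 := by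
    intro B hB
    split_ifs with hp
    · rw [card_permutations_filter_map_add_infix hσ hp, (mem_powersetCard.1 hB).2]
    · rw [filter_false_of_mem, card_empty, Nat.cast_zero, mul_zero]
      intro l hl hBl
      rw [List.mem_toFinset, List.mem_permutations] at hl
      exact hp (isIntervalPacking_of_map_add_infix hσ hov hl hBl)
  rw [sum_congr rfl hpacking, ← sum_filter, ← intervalPackings, sum_const, card_intervalPackings,
    nsmul_eq_mul, mul_comm]

theorem length_filter_avoidsHertzsprung [DecidablePred (AvoidsHertzsprung σ)]
    (hσ : σ.Perm (List.range' 1 (k + 1))) (n : ℕ) :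
    ((List.range' 1 n).permutations.filter fun l => decide (AvoidsHertzsprung σ l)).length =
      #{l ∈ (List.range' 1 n).permutations.toFinset |
        ∀ c ∈ range n, ¬ σ.map (c + ·) <:+: l} := by
  rw [← List.toFinset_card_of_nodup
    ((List.nodup_permutations _ List.nodup_range').filter _), List.toFinset_filter]
  refine congrArg card (filter_congr fun l hl => ?_)
  rw [List.mem_toFinset, List.mem_permutations] at hl
  rw [decide_eq_true_iff]
  refine ⟨fun h c _ => h c, fun h c hc => h c (mem_range.2 ?_) hc⟩
  have := add_lt_of_map_add_infix hσ hl hc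
  omega

theorem stmt_3_general [DecidablePred (AvoidsHertzsprung σ)]
    (hσ : σ.Perm (List.range' 1 (k + 1))) (hov : IsNonoverlapping σ) (n : ℕ) :
    (((List.range' 1 n).permutations.filter
        (fun l => decide (AvoidsHertzsprung σ l))).length : ℤ) =
      ∑ i ∈ range (n / (k + 1) + 1),
        (-1 : ℤ) ^ i * (n - k * i).factorial * (n - k * i).choose i := by
  have hvanish : ∀ i ∈ range (n + 1), i ∉ range (n / (k + 1) + 1) →
      (-1 : ℤ) ^ i * (n - k * i).factorial * (n - k * i).choose i = 0 := by
    intro i _ hi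
    have hlt : n < i * (k + 1) := by
      rw [← Nat.div_lt_iff_lt_mul k.succ_pos]
      simpa [Nat.lt_succ_iff] using hi
    rw [Nat.choose_eq_zero_of_lt (by grind), Nat.cast_zero, mul_zero]
  have hrange : range (n / (k + 1) + 1) ⊆ range (n + 1) :=
    range_subset_range.2 (Nat.succ_le_succ (Nat.div_le_self n (k + 1)))
  rw [length_filter_avoidsHertzsprung hσ, card_filter_forall_not, sum_powerset, card_range,
    sum_subset hrange hvanish]
  exact sum_congr rfl fun i _ => sum_powersetCard_card_filter_map_add_infix hσ hov n i

end HertzsprungPatterns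

section Pattern132

theorem infix_triple_iff {α : Type*} {a b c : α} {l : List α} :
    [a, b, c] <:+: l ↔ ∃ i, l[i]? = some a ∧ l[i + 1]? = some b ∧ l[i + 2]? = some c := by
  rw [List.infix_iff_getElem?]
  constructor
  · rintro ⟨i, -, h⟩
    refine ⟨i, ?_, ?_, ?_⟩
    · simpa using h 0 (by simp)
    · simpa [add_comm] using h 1 (by simp)
    · simpa [add_comm] using h 2 (by simp)
  · rintro ⟨i, ha, hb, hc⟩
    obtain ⟨hi, -⟩ := List.getElem?_eq_some_iff.1 hc
    refine ⟨i, by simpa [add_comm 3, Nat.succ_le_iff] using hi, fun j hj => ?_⟩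
    simp only [List.length_cons, List.length_nil] at hj
    interval_cases j <;> simpa [add_comm]

theorem isNonoverlapping_132 : IsNonoverlapping [1, 3, 2] := by
  intro l hl c d hc hd hcd
  simp only [List.map_cons, List.map_nil, infix_triple_iff] at hc hd
  obtain ⟨i, -, hc3, hc2⟩ := hc
  obtain ⟨j, hd1, hd3, hd2⟩ := hd
  have hinj {p q x : ℕ} (hp : l[p]? = some x) (hq : l[q]? = some x) : p = q :=
    (List.getElem?_inj (List.getElem?_eq_some_iff.1 hp).1 hl).1 (hp.trans hq.symm)
  by_contra! hlt
  obtain rfl | rfl : d = c + 1 ∨ d = c + 2 := by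
    simp only [List.length_cons, List.length_nil] at hlt
    omega
  · have h2 : i + 2 = j := hinj hc2 hd1
    have h3 : i + 1 = j + 2 := hinj hc3 hd2
    omega
  · have h3 : i + 1 = j := hinj hc3 hd1
    subst h3
    have := hc2.symm.trans hd3
    simp at this

theorem avoids132_iff {l : List ℕ} (hl : 0 ∉ l) :
    Avoids132 l ↔ AvoidsHertzsprung [1, 3, 2] l := by
  unfold Avoids132 AvoidsHertzsprung
  simp only [List.getD_eq_getElem?_getD, List.map_cons, List.map_nil, infix_triple_iff]
  constructor
  · rintro h c ⟨i, h1, h3, h2⟩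
    exact h i (List.getElem?_eq_some_iff.1 h1).1 (by simp [h1, h3, h2])
  · rintro h i hi ⟨h3, h2⟩
    have hget {j x : ℕ} (hj : l[j]?.getD 0 = x + 1) : l[j]? = some (x + 1) := by
      cases hlj : l[j]? <;> simp_all
    have hpos : l[i] ≠ 0 := ne_of_mem_of_not_mem (List.getElem_mem hi) hl
    obtain ⟨c, hc⟩ := Nat.exists_eq_succ_of_ne_zero hpos
    rw [List.getElem?_eq_getElem hi, hc, Option.getD_some] at h3 h2
    have h1 : l[i]? = some (c + 1) := by rw [List.getElem?_eq_getElem hi, hc]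
    exact h c ⟨i, h1, hget (by omega), hget (by omega)⟩

end Pattern132

/-- The number of permutations of {1,...,n} avoiding the Hertzsprung pattern 132
equals ∑_{i=0}^{⌊n/3⌋} (-1)^i (n-2i)! C(n-2i, i). -/
theorem stmt_3 (n : ℕ) :
    (((List.range' 1 n).permutations.filter
        (fun l => decide (Avoids132 l))).length : ℤ) =
      ∑ i ∈ Finset.range (n / 3 + 1),
        (-1 : ℤ) ^ i * (Nat.factorial (n - 2*i)) * (Nat.choose (n - 2*i) i) := by
  have hzero : ∀ l ∈ (List.range' 1 n).permutations, 0 ∉ l := fun l hl => by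
    rw [(List.mem_permutations.1 hl).mem_iff, List.mem_range'_1]
    omega
  classical
  rw [List.filter_congr fun l hl => decide_eq_decide.2 (avoids132_iff (hzero l hl))]
  exact stmt_3_general (by decide) isNonoverlapping_132 n
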